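/- (Levine concavity lemma.) Let α > 0, let T ∈ (0, ∞], and let F : [0, T) → ℝ be twice differentiable with F(t) > 0 for all t ∈ [0, T), F(t)F''(t) ≥ (α+1) F'(t)² for all t ∈ [0, T), and F'(0) > 0. Then T ≤ F(0) / (α F'(0)); in other words, F cannot remain finite and positive beyond the time F(0)/(α F'(0)). -/

import Mathlib

open scoped ENNReal

/-!
Levine's concavity argument. Where `F > 0`, put `G = F ^ (-α)`. Then
`G' = -α F ^ (-α-1) F'` and `G'' = -α F ^ (-α-2) (F F'' - (α+1) F'²) ≤ 0`, so `G` is concave and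
lies below its tangent at `0`. With `c = F 0 / (α F'(0))`, that tangent `G(0) + t G'(0)` vanishes
exactly at `t = c`. If `c < T`, this would force `G c ≤ 0`, contradicting `F c > 0`.
-/

/-- (Levine concavity lemma.) If `F > 0` on `[0,T)`, `F F'' ≥ (α+1)F'²`
on `[0,T)` and `F'(0) > 0`, then `T ≤ F(0)/(α F'(0))`. -/
theorem statement16 (α : ℝ) (hα : 0 < α) (T : ℝ≥0∞) (hT : 0 < T) (F : ℝ → ℝ)
    (hF1 : ∀ t : ℝ, 0 ≤ t → ENNReal.ofReal t < T → DifferentiableAt ℝ F t)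
    (hF2 : ∀ t : ℝ, 0 ≤ t → ENNReal.ofReal t < T → DifferentiableAt ℝ (deriv F) t)
    (hFpos : ∀ t : ℝ, 0 ≤ t → ENNReal.ofReal t < T → 0 < F t)
    (hconc : ∀ t : ℝ, 0 ≤ t → ENNReal.ofReal t < T →
      (α + 1) * (deriv F t) ^ 2 ≤ F t * deriv (deriv F) t)
    (hF'0 : 0 < deriv F 0) :
    T ≤ ENNReal.ofReal (F 0 / (α * deriv F 0)) := by
  by_contra hlt
  rw [not_le] at hlt
  have hF0 : 0 < F 0 := hFpos 0 le_rfl (by simpa using hT)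
  set c : ℝ := F 0 / (α * deriv F 0) with hc
  have hcpos : 0 < c := by positivity
  have hlt' : ∀ t : ℝ, t ≤ c → ENNReal.ofReal t < T := fun t ht =>
    (ENNReal.ofReal_le_ofReal ht).trans_lt hlt
  have hG : ∀ t : ℝ, 0 ≤ t → t ≤ c →
      HasDerivAt (fun s => F s ^ (-α)) (deriv F t * (-α) * F t ^ (-α - 1)) t := fun t h0 h1 =>
    (hF1 t h0 (hlt' t h1)).hasDerivAt.rpow_const (Or.inl (hFpos t h0 (hlt' t h1)).ne')
  have hg : ∀ t : ℝ, 0 ≤ t → t ≤ c →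
      HasDerivAt (fun s => deriv F s * (-α) * F s ^ (-α - 1))
        (deriv (deriv F) t * (-α) * F t ^ (-α - 1) +
          deriv F t * (-α) * (deriv F t * (-α - 1) * F t ^ (-α - 1 - 1))) t := fun t h0 h1 =>
    ((hF2 t h0 (hlt' t h1)).hasDerivAt.mul_const (-α)).mul
      ((hF1 t h0 (hlt' t h1)).hasDerivAt.rpow_const (Or.inl (hFpos t h0 (hlt' t h1)).ne'))
  have hanti : AntitoneOn (fun s => deriv F s * (-α) * F s ^ (-α - 1)) (Set.Icc 0 c) := by
    refine antitoneOn_of_hasDerivWithinAt_nonpos (convex_Icc 0 c)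
      (fun t ht => (hg t ht.1 ht.2).continuousAt.continuousWithinAt)
      (fun t ht => (hg t (interior_subset ht).1 (interior_subset ht).2).hasDerivWithinAt) ?_
    intro t ht
    have ht' := interior_subset ht
    have hpos := hFpos t ht'.1 (hlt' t ht'.2)
    have hcon := hconc t ht'.1 (hlt' t ht'.2)
    have hsplit : F t ^ (-α - 1) = F t ^ (-α - 1 - 1) * F t := by
      rw [← Real.rpow_add_one hpos.ne']
      congr 1
      ring
    rw [hsplit]
    have hP : 0 ≤ α * F t ^ (-α - 1 - 1) := by positivity
    nlinarith [mul_nonneg hP (sub_nonneg.2 hcon)]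
  obtain ⟨ξ, hξ, hslope⟩ := exists_hasDerivAt_eq_slope (fun s => F s ^ (-α)) _ hcpos
    (fun t ht => (hG t ht.1 ht.2).continuousAt.continuousWithinAt)
    (fun t ht => hG t ht.1.le ht.2.le)
  have hle := hanti ⟨le_rfl, hcpos.le⟩ ⟨hξ.1.le, hξ.2.le⟩ hξ.1.le
  have hGc : 0 < F c ^ (-α) := Real.rpow_pos_of_pos (hFpos c hcpos.le (hlt' c le_rfl)) _
  -- The tangent to `F ^ (-α)` at `0` vanishes at `c`.
  have htan : c * (deriv F 0 * (-α) * F 0 ^ (-α - 1)) = -F 0 ^ (-α) := by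
    have hsplit : F 0 ^ (-α) = F 0 ^ (-α - 1) * F 0 := by
      rw [← Real.rpow_add_one hF0.ne']
      congr 1
      ring
    rw [hsplit, hc]
    field_simp
  simp only at hle
  rw [hslope, sub_zero, div_le_iff₀ hcpos, mul_comm, htan] at hle
  linarith
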